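/- arXiv:1807.11166 — 4 statements merged into one kernel-verified Lean document; each statement's English description precedes it below -/
import Mathlib

section
/- Let X be a strictly convex real normed linear space and let x be a unit vector in X. If x is a left symmetric point, then x is a smooth point. -/
open Filter Topology Set

/-- Birkhoff–James orthogonality: `x ⊥_B y` iff `‖x + t • y‖ ≥ ‖x‖` for all real `t`.
For bounded linear operators this is orthogonality in the operator norm. -/
def BJOrth {E : Type*} [NormedAddCommGroup E] [NormedSpace ℝ E] (x y : E) : Prop :=
  ∀ t : ℝ, ‖x‖ ≤ ‖x + t • y‖

/-- A point `x` is left symmetric if `x ⊥_B y` implies `y ⊥_B x` for all `y`. -/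
def LeftSymPt {E : Type*} [NormedAddCommGroup E] [NormedSpace ℝ E] (x : E) : Prop :=
  ∀ y : E, BJOrth x y → BJOrth y x

/-- A point `x` is right symmetric if `y ⊥_B x` implies `x ⊥_B y` for all `y`. -/
def RightSymPt {E : Type*} [NormedAddCommGroup E] [NormedSpace ℝ E] (x : E) : Prop :=
  ∀ y : E, BJOrth y x → BJOrth x y

/-- A unit vector `x` is a smooth point if it has a unique norming functional. -/
def SmoothPt {E : Type*} [NormedAddCommGroup E] [NormedSpace ℝ E] (x : E) : Prop :=
  ∃! f : E →L[ℝ] ℝ, ‖f‖ = 1 ∧ f x = 1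

/-- A normed space is reflexive if the canonical embedding into the double dual is surjective. -/
def ReflexiveSp (E : Type*) [NormedAddCommGroup E] [NormedSpace ℝ E] : Prop :=
  Function.Surjective (NormedSpace.inclusionInDoubleDual ℝ E)

/-- The Kadets–Klee property: weak convergence of a sequence together with convergence of norms
implies norm convergence. -/
def KadetsKlee (E : Type*) [NormedAddCommGroup E] [NormedSpace ℝ E] : Prop :=
  ∀ (x : ℕ → E) (x₀ : E),
    (∀ f : E →L[ℝ] ℝ, Tendsto (fun n => f (x n)) atTop (nhds (f x₀))) →
    Tendsto (fun n => ‖x n‖) atTop (nhds ‖x₀‖) →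
    Tendsto (fun n => ‖x n - x₀‖) atTop (nhds 0)

/-- The norm attaining set `M_T` of a bounded linear operator. -/
def normAttain {X Y : Type*} [NormedAddCommGroup X] [NormedSpace ℝ X]
    [NormedAddCommGroup Y] [NormedSpace ℝ Y] (T : X →L[ℝ] Y) : Set X :=
  {x | ‖x‖ = 1 ∧ ‖T x‖ = ‖T‖}

/-- `inPlus u v` means `v ∈ u⁺`, i.e. `‖u + t • v‖ ≥ ‖u‖` for all `t ≥ 0`. -/
def inPlus {E : Type*} [NormedAddCommGroup E] [NormedSpace ℝ E] (u v : E) : Prop :=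
  ∀ t : ℝ, 0 ≤ t → ‖u‖ ≤ ‖u + t • v‖

/-- `inMinus u v` means `v ∈ u⁻`, i.e. `‖u + t • v‖ ≥ ‖u‖` for all `t ≤ 0`. -/
def inMinus {E : Type*} [NormedAddCommGroup E] [NormedSpace ℝ E] (u v : E) : Prop :=
  ∀ t : ℝ, t ≤ 0 → ‖u‖ ≤ ‖u + t • v‖

/-- A norm-one functional attaining its norm at `x` certifies that `x` is orthogonal to its
kernel. -/
theorem bjOrth_of_norming {E : Type*} [NormedAddCommGroup E] [NormedSpace ℝ E] {x y : E}
    {f : E →L[ℝ] ℝ} (hf : ‖f‖ = 1) (hfx : f x = ‖x‖) (hfy : f y = 0) : BJOrth x y := by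
  intro t
  have h := (le_abs_self _).trans (f.le_opNorm (x + t • y))
  simpa [hf, hfx, hfy] using h

/-- In a strictly convex space, a line in direction `x` contains at most one point orthogonal
to `x`. -/
theorem BJOrth.eq_of_sub_eq_smul {E : Type*} [NormedAddCommGroup E] [NormedSpace ℝ E]
    [StrictConvexSpace ℝ E] {x u v : E} {c : ℝ} (hu : BJOrth u x) (hv : BJOrth v x)
    (huv : v - u = c • x) : u = v := by
  obtain rfl : v = u + c • x := by rw [← huv]; abel
  have hnorm : ‖u‖ = ‖u + c • x‖ :=
    le_antisymm (hu c) (by simpa using hv (-c))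
  by_contra hne
  have hlt := (norm_midpoint_lt_iff hnorm).2 hne
  have hmid : (1 / 2 : ℝ) • (u + (u + c • x)) = u + (c / 2) • x := by module
  exact (hu (c / 2)).not_gt (hmid ▸ hlt)

theorem left_symmetric_implies_smooth_of_strictConvex
    {X : Type*} [NormedAddCommGroup X] [NormedSpace ℝ X] [StrictConvexSpace ℝ X]
    (x : X) (hx : ‖x‖ = 1) (hleft : LeftSymPt x) :
    SmoothPt x := by
  have hx0 : x ≠ 0 := norm_ne_zero_iff.1 (by simp [hx])
  obtain ⟨f, hf, hfx⟩ := exists_dual_vector ℝ x (norm_ne_zero_iff.2 hx0)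
  replace hfx : f x = 1 := by simpa [hx] using hfx
  refine ⟨f, ⟨hf, hfx⟩, fun g ⟨hg, hgx⟩ => ?_⟩
  ext y
  have orth {h : X →L[ℝ] ℝ} (hh : ‖h‖ = 1) (hhx : h x = 1) : BJOrth (y - h y • x) x :=
    hleft _ (bjOrth_of_norming hh (hhx.trans hx.symm) (by simp [hhx]))
  have heq : y - f y • x = y - g y • x :=
    (orth hf hfx).eq_of_sub_eq_smul (orth hg hgx) (c := f y - g y) (by module)
  exact (smul_left_injective ℝ hx0 (sub_right_injective heq)).symm
end

section
/- Let X be a real reflexive, strictly convex Banach space with the Kadets–Klee property, let Y be a real Banach space, and let T : X → Y be a bounded linear operator that is left symmetric in the operator space and satisfies M_T ≠ ∅. Then for every x ∈ M_T and every y ∈ X with y ⊥_B x, one has Ty = 0. -/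
open Filter Topology Set

/-- If `y ⊥_B x`, some functional of norm at most one norms `y` and vanishes at `x`. -/
theorem BJOrth.exists_norming_functional {E : Type*} [NormedAddCommGroup E] [NormedSpace ℝ E]
    {y x : E} (h : BJOrth y x) :
    ∃ f : E →L[ℝ] ℝ, (∀ z, |f z| ≤ ‖z‖) ∧ f y = ‖y‖ ∧ f x = 0 := by
  let S : Submodule ℝ E := Submodule.span ℝ {x}
  have : IsClosed (S : Set E) := S.closed_of_finiteDimensional
  obtain ⟨g, hg, hgy⟩ := exists_dual_vector'' ℝ (Submodule.Quotient.mk y : E ⧸ S)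
  have hmk : ∀ z : E, |g (Submodule.Quotient.mk z)| ≤ ‖z‖ := fun z =>
    calc |g (Submodule.Quotient.mk z)| ≤ 1 * ‖(Submodule.Quotient.mk z : E ⧸ S)‖ :=
          g.le_of_opNorm_le hg _
      _ ≤ ‖z‖ := by rw [one_mul]; exact Submodule.Quotient.norm_mk_le S z
  have hy : ‖y‖ ≤ ‖(Submodule.Quotient.mk y : E ⧸ S)‖ := by
    refine QuotientAddGroup.le_norm_iff.2 fun m hm => ?_
    have hmem : m - y ∈ S := (Submodule.Quotient.eq S).1 hm
    obtain ⟨t, ht⟩ := Submodule.mem_span_singleton.1 hmem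
    have := h t
    rwa [ht, add_sub_cancel] at this
  refine ⟨LinearMap.mkContinuous (g.toLinearMap ∘ₗ S.mkQ) 1 fun z => ?_, hmk, ?_, ?_⟩
  · simpa using hmk z
  · refine hgy.trans (le_antisymm (Submodule.Quotient.norm_mk_le S y) hy)
  · have : (Submodule.Quotient.mk x : E ⧸ S) = 0 :=
      (Submodule.Quotient.mk_eq_zero S).2 (Submodule.mem_span_singleton_self x)
    change g (Submodule.Quotient.mk x) = 0
    rw [this, map_zero]

/-- In a strictly convex space, a functional of norm at most one takes the value one
at no more than one point of the closed unit ball. -/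
theorem eq_of_functional_eq_one {E : Type*} [NormedAddCommGroup E] [NormedSpace ℝ E]
    [StrictConvexSpace ℝ E] {f : E →L[ℝ] ℝ} (hf : ∀ z, |f z| ≤ ‖z‖) {u w : E}
    (hu : ‖u‖ ≤ 1) (hw : ‖w‖ ≤ 1) (hfu : f u = 1) (hfw : f w = 1) : w = u := by
  have h1 : 1 ≤ ‖u‖ := by simpa [hfu] using hf u
  have h2 : 1 ≤ ‖w‖ := by simpa [hfw] using hf w
  have h3 : 2 ≤ ‖w + u‖ := by
    have := hf (w + u)
    rw [map_add, hfu, hfw] at this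
    norm_num at this
    exact this
  refine eq_of_norm_eq_of_norm_add_eq (by linarith) (le_antisymm (norm_add_le _ _) (by linarith))

/-- In a reflexive strictly convex space, a sequence in the unit ball along which a norming
functional of `u` tends to one converges weakly to `u`. -/
theorem ReflexiveSp.tendsto_weakly {E : Type*} [NormedAddCommGroup E] [NormedSpace ℝ E]
    [StrictConvexSpace ℝ E] (hrefl : ReflexiveSp E) {f : E →L[ℝ] ℝ} (hf : ∀ z, |f z| ≤ ‖z‖)
    {u : E} (hu : ‖u‖ ≤ 1) (hfu : f u = 1) {z : ℕ → E} (hz : ∀ n, ‖z n‖ ≤ 1)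
    (hfz : Tendsto (fun n => f (z n)) atTop (𝓝 1)) (g : E →L[ℝ] ℝ) :
    Tendsto (fun n => g (z n)) atTop (𝓝 (g u)) := by
  let J : E → WeakDual ℝ (StrongDual ℝ E) := fun w =>
    StrongDual.toWeakDual (NormedSpace.inclusionInDoubleDual ℝ E w)
  have hJ : Tendsto (fun n => J (z n)) atTop (𝓝 (J u)) := by
    refine (WeakDual.isCompact_closedBall (𝕜 := ℝ) (E := StrongDual ℝ E) 0 1
      ).tendsto_nhds_of_unique_mapClusterPt (Eventually.of_forall fun n => ?_) ?_
    · exact mem_closedBall_zero_iff.2 ((NormedSpace.double_dual_bound ℝ E (z n)).trans (hz n))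
    · intro φ hφ hclus
      obtain ⟨w, hw⟩ := hrefl (WeakDual.toStrongDual φ)
      have hφw : φ = J w := by
        change φ = StrongDual.toWeakDual (NormedSpace.inclusionInDoubleDual ℝ E w)
        rw [hw, WeakDual.toWeakDual_toStrongDual]
      have hwn : ‖w‖ ≤ 1 := by
        have h1 : ‖WeakDual.toStrongDual φ‖ ≤ 1 := mem_closedBall_zero_iff.1 hφ
        rw [← hw] at h1
        exact ((NormedSpace.inclusionInDoubleDualLi ℝ).norm_map w).symm.trans_le h1
      have hfw : f w = 1 := by
        have h1 : MapClusterPt (φ f) atTop (fun n => f (z n)) :=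
          hclus.continuousAt_comp (WeakDual.eval_continuous f).continuousAt
        have h2 : φ f = 1 := eq_of_nhds_neBot (h1.clusterPt.neBot.mono (inf_le_inf_left _ hfz))
        rwa [hφw] at h2
      rw [hφw, eq_of_functional_eq_one hf hu hwn hfu hfw]
  exact ((WeakDual.eval_continuous g).tendsto (J u)).comp hJ

/-- In a reflexive strictly convex space with the Kadets–Klee property, every norming functional
of a unit vector strongly exposes it. -/
theorem exists_slice_subset_ball {E : Type*} [NormedAddCommGroup E] [NormedSpace ℝ E]
    [StrictConvexSpace ℝ E] (hrefl : ReflexiveSp E) (hKK : KadetsKlee E)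
    {f : E →L[ℝ] ℝ} (hf : ∀ z, |f z| ≤ ‖z‖) {u : E} (hu : ‖u‖ = 1) (hfu : f u = 1)
    {ε : ℝ} (hε : 0 < ε) :
    ∃ δ > 0, ∀ z, ‖z‖ ≤ 1 → 1 - δ < f z → ‖z - u‖ < ε := by
  by_contra! hcon
  choose z hz hfz hzu using fun n : ℕ => hcon (1 / ((n : ℝ) + 1)) Nat.one_div_pos_of_nat
  have hle : ∀ n, f (z n) ≤ ‖z n‖ := fun n => (le_abs_self _).trans (hf _)
  have hlow : Tendsto (fun n : ℕ => 1 - 1 / ((n : ℝ) + 1)) atTop (𝓝 1) := by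
    simpa using (tendsto_one_div_add_atTop_nhds_zero_nat (𝕜 := ℝ)).const_sub 1
  have hlim : Tendsto (fun n => f (z n)) atTop (𝓝 1) :=
    tendsto_of_tendsto_of_tendsto_of_le_of_le hlow tendsto_const_nhds
      (fun n => (hfz n).le) fun n => (hle n).trans (hz n)
  have hnorm : Tendsto (fun n => ‖z n‖) atTop (𝓝 ‖u‖) := by
    rw [hu]
    exact tendsto_of_tendsto_of_tendsto_of_le_of_le hlim tendsto_const_nhds hle hz
  have hconv := hKK z u (hrefl.tendsto_weakly hf hu.le hfu hz hlim) hnorm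
  exact hε.not_ge (ge_of_tendsto' hconv hzu)

/-- If `f` strongly exposes the unit vector `u` and `T u ≠ 0`, then the rank one
operator `f ⊗ T u` is not Birkhoff–James orthogonal to `T`. -/
theorem not_bjOrth_smulRight {X Y : Type*} [NormedAddCommGroup X] [NormedSpace ℝ X]
    [NormedAddCommGroup Y] [NormedSpace ℝ Y] (T : X →L[ℝ] Y)
    {f : X →L[ℝ] ℝ} (hf : ∀ z, |f z| ≤ ‖z‖) {u : X} (hu : ‖u‖ = 1) (hfu : f u = 1)
    (hexp : ∀ ε > 0, ∃ δ > 0, ∀ z, ‖z‖ ≤ 1 → 1 - δ < f z → ‖z - u‖ < ε) (hTu : T u ≠ 0) :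
    ¬ BJOrth (f.smulRight (T u)) T := by
  intro h
  set a := ‖T u‖ with ha
  have ha0 : 0 < a := norm_pos_iff.2 hTu
  obtain ⟨δ, hδ, hδu⟩ := hexp (a / (2 * (‖T‖ + 1))) (by positivity)
  obtain ⟨s, hs0, hs2, hsT⟩ : ∃ s : ℝ, 0 < s ∧ s ≤ 1 / 2 ∧ s * ‖T‖ ≤ min δ 1 * a / 2 := by
    have hm : 0 < min δ 1 := lt_min hδ one_pos
    refine ⟨min (1 / 2) (min δ 1 * a / (2 * (‖T‖ + 1))), by positivity, min_le_left _ _, ?_⟩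
    calc _ ≤ min δ 1 * a / (2 * (‖T‖ + 1)) * (‖T‖ + 1) := by
          gcongr
          · exact min_le_right _ _
          · linarith
      _ = _ := by field_simp
  have hδ' : 0 < min δ 1 := lt_min hδ one_pos
  have hlow : a ≤ ‖f.smulRight (T u)‖ := by
    simpa [hu, hfu] using (f.smulRight (T u)).le_opNorm u
  -- the estimate on the slice around `u`
  have hslice : ∀ z, ‖z‖ ≤ 1 → 1 - min δ 1 < f z →
      ‖(f.smulRight (T u) + (-s) • T) z‖ ≤ a - s * a / 2 := by
    intro z hz hfz
    have hzu := hδu z hz (by linarith [min_le_left δ 1])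
    have hf1 : f z ≤ 1 := (le_abs_self _).trans ((hf z).trans hz)
    have hsplit : (f.smulRight (T u) + (-s) • T) z = (f z - s) • T u - s • T (z - u) := by
      simp [sub_smul, smul_sub, ← sub_eq_add_neg]
    have hTd : ‖T (z - u)‖ ≤ a / 2 :=
      calc ‖T (z - u)‖ ≤ ‖T‖ * ‖z - u‖ := T.le_opNorm _
        _ ≤ (‖T‖ + 1) * (a / (2 * (‖T‖ + 1))) := by gcongr; linarith
        _ = a / 2 := by field_simp
    have habs : |f z - s| ≤ 1 - s := abs_le.2 ⟨by linarith [min_le_right δ 1], by linarith⟩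
    calc _ ≤ |f z - s| * a + s * ‖T (z - u)‖ := by
          rw [hsplit]
          refine (norm_sub_le _ _).trans_eq ?_
          rw [norm_smul, norm_smul, Real.norm_eq_abs, Real.norm_of_nonneg hs0.le]
      _ ≤ (1 - s) * a + s * (a / 2) := by gcongr
      _ = a - s * a / 2 := by ring
  have hbound : ‖f.smulRight (T u) + (-s) • T‖ ≤ max (a - s * a / 2) (a - min δ 1 * a / 2) := by
    refine ContinuousLinearMap.opNorm_le_of_unit_norm ?_ fun z hz => ?_
    · exact le_max_of_le_left (by nlinarith)
    rcases lt_or_ge (1 - min δ 1) |f z| with hfz | hfz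
    · refine le_max_of_le_left ?_
      rcases abs_choice (f z) with habs | habs
      · exact hslice z hz.le (habs ▸ hfz)
      · have := hslice (-z) (by rw [norm_neg, hz]) (by rw [map_neg, ← habs]; exact hfz)
        rwa [map_neg, norm_neg] at this
    · refine le_max_of_le_right ?_
      calc _ ≤ |f z| * a + s * ‖T z‖ := by
            refine (norm_add_le _ _).trans_eq ?_
            simp [norm_smul, abs_of_pos hs0, ha]
        _ ≤ (1 - min δ 1) * a + s * ‖T‖ := by
            gcongr
            simpa [hz] using T.le_opNorm z
        _ ≤ a - min δ 1 * a / 2 := by linarith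
  have hlt : max (a - s * a / 2) (a - min δ 1 * a / 2) < a :=
    max_lt (by nlinarith) (by nlinarith)
  linarith [h (-s)]

theorem left_symmetric_bounded_operator_vanishes_on_orthogonal
    {X Y : Type*} [NormedAddCommGroup X] [NormedSpace ℝ X]
    [StrictConvexSpace ℝ X] [CompleteSpace X]
    [NormedAddCommGroup Y] [NormedSpace ℝ Y] [CompleteSpace Y]
    (hrefl : ReflexiveSp X) (hKK : KadetsKlee X)
    (T : X →L[ℝ] Y) (hTsym : LeftSymPt T)
    (hMT : (normAttain T).Nonempty) :
    ∀ x ∈ normAttain T, ∀ y : X, BJOrth y x → T y = 0 := by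
  intro x hx y hyx
  by_contra hTy
  have hy : y ≠ 0 := fun h => hTy (by rw [h, map_zero])
  have hy0 : ‖y‖ ≠ 0 := norm_ne_zero_iff.2 hy
  obtain ⟨f, hf, hfy, hfx⟩ := hyx.exists_norming_functional
  set u := ‖y‖⁻¹ • y with hu_def
  have hu : ‖u‖ = 1 := by simp [hu_def, norm_smul, hy0]
  have hfu : f u = 1 := by simp [hu_def, hfy, hy0]
  have hTu : T u ≠ 0 := by simp [hu_def, hy, hTy]
  refine not_bjOrth_smulRight T hf hu hfu
    (fun ε hε => exists_slice_subset_ball hrefl hKK hf hu hfu hε) hTu (hTsym _ fun t => ?_)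
  have := (T + t • f.smulRight (T u)).le_opNorm x
  simpa [hfx, hx.1, hx.2] using this
end

section
/- Let n ≥ 2, let ℓ₁ⁿ denote ℝⁿ with the ℓ¹ norm, and let e₁,…,eₙ denote the standard basis vectors. Let Y be a real reflexive, smooth Banach space and let T : ℓ₁ⁿ → Y be a nonzero bounded linear operator with ‖T‖ = 1. Then T is left symmetric in the operator space if and only if there exist a unit vector w ∈ Y, a norm-one linear functional f on ℓ₁ⁿ, and an index k ∈ {1,…,n} such that Tx = f(x)·w for all x, w is a left symmetric point of Y, |f(e_k)| = 1, and f(e_j) = 0 for all j ≠ k. -/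
open Filter Topology Set

/-- The `k`-th standard basis vector of `ℓ₁ⁿ`. -/
noncomputable def stdBasisL1 (n : ℕ) (k : Fin n) : PiLp 1 (fun _ : Fin n => ℝ) :=
  (WithLp.equiv 1 (∀ _ : Fin n, ℝ)).symm (Pi.single k 1)

lemma stdBasisL1_apply (n : ℕ) (k i : Fin n) :
    stdBasisL1 n k i = if i = k then 1 else 0 := by
  simp [stdBasisL1]

lemma norm_stdBasisL1 (n : ℕ) (k : Fin n) : ‖stdBasisL1 n k‖ = 1 := by
  rw [PiLp.norm_eq_of_L1]
  simp [stdBasisL1_apply, apply_ite norm]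

lemma sum_smul_stdBasisL1 {n : ℕ} (x : PiLp 1 (fun _ : Fin n => ℝ)) :
    ∑ i, x i • stdBasisL1 n i = x := by
  ext j
  simp [stdBasisL1_apply]

section OperatorNorm

variable {Y : Type*} [NormedAddCommGroup Y] [NormedSpace ℝ Y] {n : ℕ}

lemma map_eq_sum_stdBasisL1 (A : PiLp 1 (fun _ : Fin n => ℝ) →L[ℝ] Y)
    (x : PiLp 1 (fun _ : Fin n => ℝ)) : A x = ∑ i, x i • A (stdBasisL1 n i) := by
  conv_lhs => rw [← sum_smul_stdBasisL1 x]
  simp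

lemma norm_map_stdBasisL1_le (A : PiLp 1 (fun _ : Fin n => ℝ) →L[ℝ] Y) (i : Fin n) :
    ‖A (stdBasisL1 n i)‖ ≤ ‖A‖ := by
  simpa [norm_stdBasisL1] using A.le_opNorm (stdBasisL1 n i)

lemma opNorm_le_of_norm_map_stdBasisL1_le (A : PiLp 1 (fun _ : Fin n => ℝ) →L[ℝ] Y) {C : ℝ}
    (hC : 0 ≤ C) (h : ∀ i, ‖A (stdBasisL1 n i)‖ ≤ C) : ‖A‖ ≤ C := by
  refine A.opNorm_le_bound hC fun x => ?_
  rw [map_eq_sum_stdBasisL1, PiLp.norm_eq_of_L1, Finset.mul_sum]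
  refine (norm_sum_le _ _).trans (Finset.sum_le_sum fun i _ => ?_)
  rw [norm_smul, mul_comm]
  exact mul_le_mul_of_nonneg_right (h i) (norm_nonneg _)

/-- An operator on `ℓ₁ⁿ` attains its norm at a standard basis vector. -/
lemma exists_norm_map_stdBasisL1_eq [Nonempty (Fin n)]
    (A : PiLp 1 (fun _ : Fin n => ℝ) →L[ℝ] Y) : ∃ i, ‖A (stdBasisL1 n i)‖ = ‖A‖ := by
  obtain ⟨i, hi⟩ := Finite.exists_max fun i => ‖A (stdBasisL1 n i)‖
  exact ⟨i, le_antisymm (norm_map_stdBasisL1_le A i)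
    (opNorm_le_of_norm_map_stdBasisL1_le A (norm_nonneg _) hi)⟩

/-- The operator on `ℓ₁ⁿ` sending the `k`-th basis vector to `y` and the others to `0`. -/
noncomputable def singleOp (k : Fin n) (y : Y) : PiLp 1 (fun _ : Fin n => ℝ) →L[ℝ] Y :=
  (PiLp.proj (𝕜 := ℝ) 1 (fun _ : Fin n => ℝ) k).smulRight y

lemma singleOp_apply (k : Fin n) (y : Y) (x : PiLp 1 (fun _ : Fin n => ℝ)) :
    singleOp k y x = x k • y := rfl

lemma singleOp_stdBasisL1 (k i : Fin n) (y : Y) :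
    singleOp k y (stdBasisL1 n i) = if k = i then y else 0 := by
  simp [singleOp_apply, stdBasisL1_apply]

lemma norm_singleOp (k : Fin n) (y : Y) : ‖singleOp k y‖ = ‖y‖ := by
  refine le_antisymm (opNorm_le_of_norm_map_stdBasisL1_le _ (norm_nonneg _) fun i => ?_) ?_
  · rw [singleOp_stdBasisL1]
    split_ifs <;> simp
  · simpa [singleOp_stdBasisL1] using norm_map_stdBasisL1_le (singleOp k y) k

lemma singleOp_add_smul (k : Fin n) (x y : Y) (t : ℝ) :
    singleOp k (x + t • y) = singleOp k x + t • singleOp k y := by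
  ext z
  simp [singleOp_apply, smul_comm t]

lemma bjOrth_singleOp_iff (k : Fin n) (x y : Y) :
    BJOrth (singleOp k x) (singleOp k y) ↔ BJOrth x y := by
  simp only [BJOrth, ← singleOp_add_smul, norm_singleOp]

end OperatorNorm

section BirkhoffJames

variable {E : Type*} [NormedAddCommGroup E] [NormedSpace ℝ E]

/-- Birkhoff–James orthogonality is a local condition, by convexity of the norm. -/
lemma BJOrth.of_eventually {x y : E} (h : ∀ᶠ t : ℝ in 𝓝 0, ‖x‖ ≤ ‖x + t • y‖) :
    BJOrth x y := by
  intro t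
  have hlim : Tendsto (fun s : ℝ => s * t) (𝓝[>] 0) (𝓝 0) := by
    have : Tendsto (fun s : ℝ => s * t) (𝓝 0) (𝓝 (0 * t)) :=
      Continuous.tendsto (by fun_prop) 0
    rw [zero_mul] at this
    exact this.mono_left nhdsWithin_le_nhds
  obtain ⟨s, hs, hs0, hs1⟩ :=
    ((hlim.eventually h).and (Ioo_mem_nhdsGT (zero_lt_one (α := ℝ)))).exists
  have hconv : x + (s * t) • y = (1 - s) • x + s • (x + t • y) := by module
  rw [hconv] at hs
  have hle := hs.trans (norm_add_le _ _)
  rw [norm_smul, norm_smul, Real.norm_of_nonneg hs0.le,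
    Real.norm_of_nonneg (sub_nonneg.2 hs1.le)] at hle
  refine le_of_mul_le_mul_left ?_ hs0
  linarith

lemma bjOrth_neg_left {x y : E} : BJOrth (-x) y ↔ BJOrth x y := by
  have key : ∀ {u : E}, BJOrth u y → BJOrth (-u) y := fun {u} h t => by
    have := h (-t)
    rwa [← norm_neg u, ← norm_neg (u + -t • y), neg_add, neg_smul, neg_neg] at this
  exact ⟨fun h => by simpa using key h, key⟩

lemma bjOrth_neg_right {x y : E} : BJOrth x (-y) ↔ BJOrth x y := by
  have key : ∀ {u : E}, BJOrth x u → BJOrth x (-u) := fun {u} h t => by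
    simpa using h (-t)
  exact ⟨fun h => by simpa using key h, key⟩

lemma LeftSymPt.neg {x : E} (h : LeftSymPt x) : LeftSymPt (-x) := fun y hy =>
  bjOrth_neg_right.2 (h y (bjOrth_neg_left.1 hy))

end BirkhoffJames

section LeftSymmetric

variable {Y : Type*} [NormedAddCommGroup Y] [NormedSpace ℝ Y] {n : ℕ}

/-- A left symmetric operator attaining its norm at a basis vector vanishes at the others. -/
lemma LeftSymPt.map_stdBasisL1_eq_zero {T : PiLp 1 (fun _ : Fin n => ℝ) →L[ℝ] Y}
    (hT : LeftSymPt T) {k j : Fin n} (hk : ‖T (stdBasisL1 n k)‖ = ‖T‖) (hjk : j ≠ k) :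
    T (stdBasisL1 n j) = 0 := by
  by_contra hne
  set y := T (stdBasisL1 n j) with hy
  have hypos : 0 < ‖y‖ := norm_pos_iff.2 hne
  have hTA : BJOrth T (singleOp j y) := fun t => by
    have := norm_map_stdBasisL1_le (T + t • singleOp j y) k
    simpa [singleOp_stdBasisL1, hjk, hk] using this
  have hTpos : 0 < ‖T‖ := hypos.trans_le (norm_map_stdBasisL1_le T j)
  set s := ‖y‖ / (2 * ‖T‖) with hs
  have hsT : s * ‖T‖ = ‖y‖ / 2 := by rw [hs]; field_simp
  have hspos : 0 < s := by positivity
  have hsle : s ≤ 1 := by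
    rw [hs, div_le_one (by positivity)]
    linarith [norm_map_stdBasisL1_le T j]
  have hAT := hT _ hTA (-s)
  rw [norm_singleOp] at hAT
  have hlt : max (‖y‖ / 2) ((1 - s) * ‖y‖) < ‖y‖ := by
    refine max_lt (by linarith) ?_
    nlinarith
  refine absurd (hAT.trans (opNorm_le_of_norm_map_stdBasisL1_le _
    (le_max_of_le_left (by positivity)) fun i => ?_)) hlt.not_ge
  by_cases hi : j = i
  · subst hi
    refine le_max_of_le_right (le_of_eq ?_)
    have : y + -s • y = (1 - s) • y := by module
    simp only [add_apply, smul_apply,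
      singleOp_stdBasisL1, if_true, ← hy]
    rw [this, norm_smul, Real.norm_of_nonneg (sub_nonneg.2 hsle)]
  · refine le_max_of_le_left ?_
    simp only [add_apply, smul_apply,
      singleOp_stdBasisL1, if_neg hi, zero_add, norm_smul, norm_neg,
      Real.norm_of_nonneg hspos.le]
    rw [← hsT]
    exact mul_le_mul_of_nonneg_left (norm_map_stdBasisL1_le T i) hspos.le

lemma leftSymPt_singleOp {k : Fin n} {w : Y} (hw : LeftSymPt w) :
    LeftSymPt (singleOp k w) := by
  have : Nonempty (Fin n) := ⟨k⟩
  rcases eq_or_ne w 0 with rfl | hw0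
  · intro A _ t
    have : (singleOp k (0 : Y) : PiLp 1 (fun _ : Fin n => ℝ) →L[ℝ] Y) = 0 := by
      ext x; simp [singleOp_apply]
    simp [this]
  intro A hA
  have horth : BJOrth w (A (stdBasisL1 n k)) := by
    have hsmall : ∀ᶠ t : ℝ in 𝓝 0, ‖t‖ * ‖A‖ < ‖w‖ := by
      have : Tendsto (fun t : ℝ => ‖t‖ * ‖A‖) (𝓝 0) (𝓝 (‖(0 : ℝ)‖ * ‖A‖)) :=
        Continuous.tendsto (by fun_prop) 0
      rw [norm_zero, zero_mul] at this
      exact this.eventually_lt_const (norm_pos_iff.2 hw0)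
    refine BJOrth.of_eventually (hsmall.mono fun t ht => ?_)
    obtain ⟨i, hi⟩ := exists_norm_map_stdBasisL1_eq (singleOp k w + t • A)
    have hle := hA t
    rw [norm_singleOp, ← hi] at hle
    by_cases hik : k = i
    · subst hik
      simpa [singleOp_stdBasisL1] using hle
    · simp only [add_apply, smul_apply,
        singleOp_stdBasisL1, if_neg hik, zero_add, norm_smul] at hle
      exact absurd (hle.trans (mul_le_mul_of_nonneg_left (norm_map_stdBasisL1_le A i)
        (norm_nonneg t))) ht.not_ge
  intro t
  refine opNorm_le_of_norm_map_stdBasisL1_le _ (norm_nonneg _) fun i => ?_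
  refine le_trans ?_ (norm_map_stdBasisL1_le (A + t • singleOp k w) i)
  by_cases hik : k = i
  · subst hik
    simpa [singleOp_stdBasisL1] using hw _ horth t
  · simp [singleOp_stdBasisL1, hik]

end LeftSymmetric

theorem left_symmetric_operator_on_l1n_characterization
    {Y : Type*} [NormedAddCommGroup Y] [NormedSpace ℝ Y] [CompleteSpace Y]
    (hYrefl : ReflexiveSp Y)
    (hYsmooth : ∀ y : Y, ‖y‖ = 1 → SmoothPt y)
    (n : ℕ) (hn : 2 ≤ n)
    (T : PiLp 1 (fun _ : Fin n => ℝ) →L[ℝ] Y) (hT0 : T ≠ 0) (hTnorm : ‖T‖ = 1) :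
    LeftSymPt T ↔
      ∃ (w : Y) (f : PiLp 1 (fun _ : Fin n => ℝ) →L[ℝ] ℝ) (k : Fin n),
        ‖w‖ = 1 ∧ ‖f‖ = 1 ∧ (∀ x, T x = f x • w) ∧ LeftSymPt w ∧
        |f (stdBasisL1 n k)| = 1 ∧ ∀ j : Fin n, j ≠ k → f (stdBasisL1 n j) = 0 := by
  constructor
  · intro hT
    have : Nonempty (Fin n) := ⟨⟨0, by omega⟩⟩
    obtain ⟨k, hk⟩ := exists_norm_map_stdBasisL1_eq T
    have hTk : T = singleOp k (T (stdBasisL1 n k)) := by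
      ext x
      rw [map_eq_sum_stdBasisL1 T x, singleOp_apply]
      refine Finset.sum_eq_single k (fun j _ hj => ?_) (by simp)
      rw [hT.map_stdBasisL1_eq_zero hk hj, smul_zero]
    refine ⟨T (stdBasisL1 n k), singleOp k 1, k, hk.trans hTnorm, by simp [norm_singleOp],
      fun x => ?_, fun y hy => ?_, by simp [singleOp_stdBasisL1],
      fun j hj => by simp [singleOp_stdBasisL1, hj.symm]⟩
    · conv_lhs => rw [hTk]
      simp [singleOp_apply]
    · rw [← bjOrth_singleOp_iff k, ← hTk] at hy ⊢
      exact hT _ hy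
  · rintro ⟨w, f, k, -, -, hTf, hw, hfk, hfj⟩
    have hT : T = singleOp k (f (stdBasisL1 n k) • w) := by
      ext x
      rw [hTf, singleOp_apply, map_eq_sum_stdBasisL1 f x,
        Finset.sum_eq_single k (fun j _ hj => by rw [hfj j hj, smul_zero]) (by simp),
        smul_assoc]
    rw [hT]
    refine leftSymPt_singleOp ?_
    rcases eq_or_eq_neg_of_abs_eq hfk with h | h
    · simpa [h] using hw
    · simpa [h] using hw.neg
end

section
/- Let X be a real reflexive Banach space and let T : X → X be a compact bounded linear operator with M_T = {x, −x} for some unit vector x. If T is right symmetric in the operator space, then Tx is a right symmetric point of X. Moreover, if in addition Tx is a smooth point, then Tx is also a left symmetric point of X. -/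
open Filter Topology Set

section WeakCompactness

variable {X Y : Type*} [NormedAddCommGroup X] [NormedSpace ℝ X]
  [NormedAddCommGroup Y] [NormedSpace ℝ Y]

/-- In a reflexive space, every family in the unit ball converges weakly along every
ultrafilter. -/
lemma ReflexiveSp.exists_weak_limit (hrefl : ReflexiveSp X) {ι : Type*} (U : Ultrafilter ι)
    (v : ι → X) (hv : ∀ i, ‖v i‖ ≤ 1) :
    ∃ z : X, ‖z‖ ≤ 1 ∧
      ∀ g : X →L[ℝ] ℝ, Tendsto (fun i => g (v i)) U (𝓝 (g z)) := by
  let J : ι → WeakDual ℝ (StrongDual ℝ X) := fun i =>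
    StrongDual.toWeakDual (NormedSpace.inclusionInDoubleDual ℝ X (v i))
  have hJ : ∀ i, J i ∈ WeakDual.toStrongDual ⁻¹'
      Metric.closedBall (0 : StrongDual ℝ (StrongDual ℝ X)) 1 := by
    intro i
    exact (mem_closedBall_zero_iff (E := StrongDual ℝ (StrongDual ℝ X))).2
      ((NormedSpace.double_dual_bound ℝ X (v i)).trans (hv i))
  obtain ⟨Φ, hΦ, hlim⟩ := (WeakDual.isCompact_closedBall
    (0 : StrongDual ℝ (StrongDual ℝ X)) 1).ultrafilter_le_nhds (U.map J)
    (le_principal_iff.2 (mem_map.2 (univ_mem' hJ)))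
  obtain ⟨z, hz⟩ := hrefl (WeakDual.toStrongDual Φ)
  refine ⟨z, ?_, fun g => ?_⟩
  · have hΦ' := mem_closedBall_zero_iff.1 (mem_preimage.1 hΦ)
    rw [← hz] at hΦ'
    rwa [← (NormedSpace.inclusionInDoubleDualLi ℝ (E := X)).norm_map z]
  · have hT : Tendsto J U (𝓝 Φ) := hlim
    have hg := ((WeakDual.eval_continuous g).tendsto Φ).comp hT
    have hΦg : Φ g = g z := by
      rw [← NormedSpace.dual_def ℝ X z g, hz]
      rfl
    rwa [hΦg] at hg

/-- A compact operator turns weak convergence of a family in the unit ball along an ultrafilter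
into norm convergence. -/
lemma IsCompactOperator.tendsto_of_weak_limit {S : X →L[ℝ] Y} (hS : IsCompactOperator S)
    {ι : Type*} {U : Ultrafilter ι} {v : ι → X} (hv : ∀ i, ‖v i‖ ≤ 1) {z : X}
    (hz : ∀ g : X →L[ℝ] ℝ, Tendsto (fun i => g (v i)) U (𝓝 (g z))) :
    Tendsto (fun i => S (v i)) U (𝓝 (S z)) := by
  have hK := hS.isCompact_closure_image_closedBall (𝕜₁ := ℝ) (f := (S : X →ₗ[ℝ] Y)) 1
  obtain ⟨w, -, hlim⟩ := hK.ultrafilter_le_nhds (U.map fun i => S (v i))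
    (le_principal_iff.2 (mem_map.2 (univ_mem' fun i =>
      subset_closure ⟨v i, mem_closedBall_zero_iff.2 (hv i), rfl⟩)))
  have hT : Tendsto (fun i => S (v i)) U (𝓝 w) := hlim
  suffices w = S z from this ▸ hT
  refine (SeparatingDual.eq_iff_forall_dual_eq (R := ℝ)).2 fun g => ?_
  exact tendsto_nhds_unique ((g.continuous.tendsto w).comp hT) (hz (g.comp S))

end WeakCompactness

section OperatorOrthogonality

variable {X Y : Type*} [NormedAddCommGroup X] [NormedSpace ℝ X]
  [NormedAddCommGroup Y] [NormedSpace ℝ Y]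

/-- If `T ⊥_B A` for compact operators on a reflexive space, then for each `s > 0` there is a
point `z` of the unit ball with `‖T z‖ = ‖T‖` and `‖T z + s • A z‖ ≥ ‖T‖`. -/
lemma BJOrth.exists_norm_le_of_pos (hrefl : ReflexiveSp X) {T A : X →L[ℝ] Y}
    (hT : IsCompactOperator T) (hA : IsCompactOperator A) (hTA : BJOrth T A)
    {s : ℝ} (hs : 0 < s) :
    ∃ z : X, ‖z‖ ≤ 1 ∧ ‖T z‖ = ‖T‖ ∧ ‖T‖ ≤ ‖T z + s • A z‖ := by
  let r : ℕ → ℝ := fun n => 1 / ((n : ℝ) + 1)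
  have hr0 : ∀ n, 0 < r n := fun n => Nat.one_div_pos_of_nat
  have hex : ∀ n, ∃ v : X, ‖v‖ < 1 ∧ ‖T‖ - r n ^ 2 < ‖(T + r n • A) v‖ := fun n =>
    (T + r n • A).exists_lt_apply_of_lt_opNorm
      (by linarith [hTA (r n), pow_pos (hr0 n) 2])
  choose v hv hlt using hex
  have hv' : ∀ n, ‖v n‖ ≤ 1 := fun n => (hv n).le
  obtain ⟨z, hz1, hz⟩ := hrefl.exists_weak_limit (hyperfilter ℕ) v hv'
  have hTz := hT.tendsto_of_weak_limit hv' hz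
  have hAz := hA.tendsto_of_weak_limit hv' hz
  have hr : Tendsto r (hyperfilter ℕ) (𝓝 0) :=
    tendsto_one_div_add_atTop_nhds_zero_nat.mono_left Nat.hyperfilter_le_atTop
  have hTv : ∀ n, ‖T (v n)‖ ≤ ‖T‖ := fun n => T.unit_le_opNorm _ (hv' n)
  refine ⟨z, hz1, le_antisymm (T.unit_le_opNorm _ hz1) ?_, ?_⟩
  · have h1 : Tendsto (fun n => ‖T‖ - r n ^ 2) (hyperfilter ℕ) (𝓝 ‖T‖) := by
      simpa using (hr.pow 2).const_sub ‖T‖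
    have h2 : Tendsto (fun n => ‖T (v n) + r n • A (v n)‖) (hyperfilter ℕ) (𝓝 ‖T z‖) := by
      simpa using (hTz.add (hr.smul hAz)).norm
    exact le_of_tendsto_of_tendsto' h1 h2 fun n => (hlt n).le
  · have h1 : Tendsto (fun n => ‖T‖ - r n * s) (hyperfilter ℕ) (𝓝 ‖T‖) := by
      simpa using (hr.mul_const s).const_sub ‖T‖
    refine le_of_tendsto_of_tendsto h1 (hTz.add (hAz.const_smul s)).norm ?_
    filter_upwards [hr.eventually (gt_mem_nhds hs)] with n hn
    have hconv : T (v n) + r n • A (v n)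
        = (1 - r n / s) • T (v n) + (r n / s) • (T (v n) + s • A (v n)) := by
      rw [smul_add, smul_smul, div_mul_cancel₀ _ hs.ne', sub_smul, one_smul]
      abel
    have hq0 : 0 < r n / s := div_pos (hr0 n) hs
    have hq1 : r n / s < 1 := (div_lt_one hs).2 hn
    have hnorm : ‖T (v n) + r n • A (v n)‖
        ≤ (1 - r n / s) * ‖T‖ + (r n / s) * ‖T (v n) + s • A (v n)‖ := by
      rw [hconv]
      refine (norm_add_le _ _).trans ?_
      rw [norm_smul, norm_smul, Real.norm_of_nonneg hq0.le,
        Real.norm_of_nonneg (sub_nonneg.2 hq1.le)]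
      gcongr
      exact hTv n
    have hlt' : ‖T‖ - r n ^ 2 < ‖T (v n) + r n • A (v n)‖ := hlt n
    have hsq : r n ^ 2 = (r n / s) * (r n * s) := by
      field_simp
    have key : (r n / s) * (‖T‖ - r n * s) ≤ (r n / s) * ‖T (v n) + s • A (v n)‖ := by
      linarith
    exact le_of_mul_le_mul_left key hq0

/-- If `T ⊥_B A` for compact operators on a reflexive space and `T ≠ 0` attains its norm only at
`±x`, then `T x ⊥_B A x`. -/
lemma BJOrth.apply_of_normAttain_eq_pair (hrefl : ReflexiveSp X) {T A : X →L[ℝ] Y}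
    (hT : IsCompactOperator T) (hA : IsCompactOperator A) (hT0 : T ≠ 0) {x : X}
    (hMT : normAttain T = {x, -x}) (hTA : BJOrth T A) : BJOrth (T x) (A x) := by
  have hTx : ‖T x‖ = ‖T‖ := by
    have : x ∈ normAttain T := hMT ▸ mem_insert x {-x}
    exact this.2
  have pos : ∀ B : X →L[ℝ] Y, IsCompactOperator B → BJOrth T B → ∀ s : ℝ, 0 < s →
      ‖T x‖ ≤ ‖T x + s • B x‖ := by
    intro B hB hTB s hs
    obtain ⟨z, hz1, hTz, hle⟩ := hTB.exists_norm_le_of_pos hrefl hT hB hs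
    have hz : ‖z‖ = 1 := by
      refine le_antisymm hz1 (le_of_mul_le_mul_left ?_ (norm_pos_iff.2 hT0))
      rw [mul_one]
      exact hTz ▸ T.le_opNorm z
    have hmem : z ∈ normAttain T := ⟨hz, hTz⟩
    rw [hMT] at hmem
    rw [hTx]
    rcases hmem with rfl | rfl
    · exact hle
    · rwa [map_neg, map_neg, smul_neg, ← neg_add, norm_neg] at hle
  intro t
  rcases lt_trichotomy t 0 with ht | rfl | ht
  · have h := pos (-A) hA.neg (fun u => by simpa using hTA (-u)) (-t) (neg_pos.2 ht)
    simpa using h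
  · simp
  · exact pos A hA hTA t ht

end OperatorOrthogonality

section Points

variable {E : Type*} [NormedAddCommGroup E] [NormedSpace ℝ E]

/-- James: if `u ⊥_B v` and `u ≠ 0` then some norming functional of `u` vanishes at `v`. -/
lemma BJOrth.exists_norming_functional_s17 {u v : E} (hu : u ≠ 0) (h : BJOrth u v) :
    ∃ f : E →L[ℝ] ℝ, (‖f‖ = 1 ∧ f u = ‖u‖) ∧ f v = 0 := by
  let S : Submodule ℝ E := ℝ ∙ v
  have hnorm : ‖S.mkQL u‖ = ‖u‖ := by
    refine le_antisymm (Submodule.Quotient.norm_mk_le S u) ?_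
    refine le_of_forall_pos_le_add fun ε hε => ?_
    obtain ⟨w, hw, hlt⟩ := Submodule.Quotient.norm_mk_lt (S := S) (S.mkQL u) hε
    obtain ⟨t, ht⟩ := Submodule.mem_span_singleton.1 ((Submodule.Quotient.eq S).1 hw)
    have : u + t • v = w := by rw [ht]; abel
    exact (this ▸ h t).trans hlt.le
  have hq : ‖S.mkQL u‖ ≠ 0 := by rwa [hnorm, norm_ne_zero_iff]
  obtain ⟨g, hg, hgu⟩ := exists_dual_vector ℝ (S.mkQL u) hq
  have hfu : (g.comp S.mkQL) u = ‖u‖ := hgu.trans hnorm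
  refine ⟨g.comp S.mkQL, ⟨le_antisymm ?_ ?_, hfu⟩, ?_⟩
  · refine ContinuousLinearMap.opNorm_le_bound _ zero_le_one fun e => ?_
    rw [← hg]
    exact (g.le_opNorm _).trans
      (mul_le_mul_of_nonneg_left (Submodule.Quotient.norm_mk_le S e) (norm_nonneg g))
  · have hle := (g.comp S.mkQL).le_opNorm u
    rw [hfu, norm_norm] at hle
    exact le_of_mul_le_mul_right (by rwa [one_mul]) (norm_pos_iff.2 hu)
  · have hv : S.mkQL v = 0 :=
      (Submodule.Quotient.mk_eq_zero S).2 (Submodule.mem_span_singleton_self v)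
    rw [ContinuousLinearMap.comp_apply, hv, map_zero]

/-- Every line in direction `u ≠ 0` contains a point that is orthogonal to `u`. -/
lemma exists_bjOrth_add_smul {u : E} (hu : u ≠ 0) (y : E) : ∃ b : ℝ, BJOrth (y + b • u) u := by
  have hcoer : Tendsto (fun b : ℝ => ‖y + b • u‖) (cocompact ℝ) atTop := by
    have h1 : Tendsto (fun b : ℝ => ‖b‖ * ‖u‖ - ‖y‖) (cocompact ℝ) atTop :=
      tendsto_atTop_add_const_right _ _
        ((tendsto_norm_cocompact_atTop (E := ℝ)).atTop_mul_const (norm_pos_iff.2 hu))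
    refine tendsto_atTop_mono (fun b => ?_) h1
    rw [← norm_smul, add_comm y]
    exact norm_sub_le_norm_add (b • u) y
  obtain ⟨b, hb⟩ := Continuous.exists_forall_le (f := fun b : ℝ => ‖y + b • u‖)
    (by fun_prop) hcoer
  refine ⟨b, fun t => ?_⟩
  rw [add_assoc, ← add_smul]
  exact hb (b + t)

/-- A smooth right symmetric point is left symmetric. -/
lemma RightSymPt.leftSymPt_of_smooth {u : E} (hu : RightSymPt u) (hu0 : u ≠ 0)
    (hsm : ∃! f : E →L[ℝ] ℝ, ‖f‖ = 1 ∧ f u = ‖u‖) : LeftSymPt u := by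
  intro y hy
  obtain ⟨b, hb⟩ := exists_bjOrth_add_smul hu0 y
  obtain ⟨f, hf, hfy⟩ := hy.exists_norming_functional_s17 hu0
  obtain ⟨g, hg, hgy⟩ := (hu _ hb).exists_norming_functional_s17 hu0
  rw [hsm.unique hg hf, map_add, map_smul, hfy, hf.2, zero_add, smul_eq_mul] at hgy
  have hb0 : b = 0 := (mul_eq_zero.1 hgy).resolve_right (norm_ne_zero_iff.2 hu0)
  simpa [hb0] using hb

end Points

theorem right_symmetric_operator_image_properties
    {X : Type*} [NormedAddCommGroup X] [NormedSpace ℝ X] [CompleteSpace X]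
    (hrefl : ReflexiveSp X)
    (T : X →L[ℝ] X) (hTcpt : IsCompactOperator T)
    (x : X) (hx : ‖x‖ = 1) (hMT : normAttain T = {x, -x})
    (hTsym : RightSymPt T) :
    RightSymPt (T x) ∧
      ((∃! f : X →L[ℝ] ℝ, ‖f‖ = 1 ∧ f (T x) = ‖T x‖) → LeftSymPt (T x)) := by
  have hxM : x ∈ normAttain T := hMT ▸ mem_insert x {-x}
  rcases eq_or_ne T 0 with rfl | hT0
  · exact ⟨fun y _ t => by simp, fun _ y _ t => by simp⟩
  have hTx0 : T x ≠ 0 := by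
    rw [← norm_ne_zero_iff, hxM.2]
    exact norm_ne_zero_iff.2 hT0
  have hright : RightSymPt (T x) := by
    intro y hy
    obtain ⟨f, hf, hfx⟩ := exists_dual_vector ℝ x (by rw [hx]; exact one_ne_zero)
    have hfx1 : f x = 1 := by simpa [hx] using hfx
    let A : X →L[ℝ] X := f.smulRight y
    have hAx : A x = y := by simp [A, hfx1]
    have hA : IsCompactOperator A := by
      have h1 : IsCompactOperator (ContinuousLinearMap.toSpanSingleton ℝ y) :=
        isCompactOperator_of_locallyCompactSpace_rng _
      exact h1.comp_clm f
    have hAT : BJOrth A T := by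
      intro t
      calc ‖A‖ = ‖y‖ := by simp [A, hf]
        _ ≤ ‖y + t • T x‖ := hy t
        _ = ‖(A + t • T) x‖ := by simp [hAx]
        _ ≤ ‖A + t • T‖ := ContinuousLinearMap.unit_le_opNorm _ _ hx.le
    simpa [hAx] using
      (hTsym A hAT).apply_of_normAttain_eq_pair hrefl hTcpt hA hT0 hMT
  exact ⟨hright, hright.leftSymPt_of_smooth hTx0⟩
end
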